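/- Let p be a prime, r ∈ ℕ_{≥2}, R = ℤ/p^rℤ with maximal ideal I = pR, and let m > 2 be an integer. Then σ_{2m}(1) = 0, and for every ℓ with 1 < ℓ < r: σ_{2m}(ℓ) = p^{(2m−3)r − ℓ(m−2) + 1 − m} · (p^{m−1} − 1) · [ℓ−1]_{p^{m−2}}, where [k]_q := (q^k − 1)/(q − 1). -/

import Mathlib

open Matrix

/-- `η(a)` is the matrix `![![a, -1], ![1, 0]]`. -/
def eta {R : Type*} [CommRing R] (a : R) : Matrix (Fin 2) (Fin 2) R := !![a, -1; 1, 0]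

/-- `[c₁, …, cₙ] = η(c₁)·η(c₂)⋯η(cₙ)`. -/
def prodEta {R : Type*} [CommRing R] {n : ℕ} (c : Fin n → R) : Matrix (Fin 2) (Fin 2) R :=
  (List.ofFn fun i => eta (c i)).prod


/-- `σ_n(ℓ) := |σ_{(-1)^(n/2)+p^ℓ, n}|`: the number of tuples `(c₁, …, cₙ) ∈ Iⁿ`
(`I = pR ⊆ R = ℤ/p^rℤ`) with `[c₁, …, cₙ] = diag(z, z⁻¹)` for `z = (-1)^(n/2) + p^ℓ`. -/
noncomputable def sigmaCount (p r n ℓ : ℕ) : ℕ :=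
  Nat.card {c : Fin n → ZMod (p ^ r) //
    (∀ i, c i ∈ Ideal.span {(p : ZMod (p ^ r))}) ∧
    prodEta c = !![(-1) ^ (n / 2) + (p : ZMod (p ^ r)) ^ ℓ, 0;
                   0, Ring.inverse ((-1) ^ (n / 2) + (p : ZMod (p ^ r)) ^ ℓ)]}

/-- The q-integer `[k]_q = 1 + q + ⋯ + q^(k-1) = (q^k - 1)/(q - 1)`. -/
def qInt (k q : ℕ) : ℕ := ∑ i ∈ Finset.range k, q ^ i

/-!
Reading a product of `2k` matrices `η(c)` as its action on a row vector `(x, y)` and taking the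
factors two at a time, `(x, y) η(a) η(b) = -(x - b s, s)` with `s = a x + y`. As long as `x` is a
unit and the entries lie in an ideal `I` contained in the Jacobson radical, `a ↦ s` is a permutation
of `I`, so the `cᵢ` can be traded for free pairs `(yᵢ, bᵢ) ∈ I²`, and the top left entry of the
product becomes `±(1 - ∑ yᵢ bᵢ)`. In an equation `[c₁, …, c₂ₘ] = diag(z, z⁻¹)` the first two entries
are determined by the others, which leaves the count of solutions of `∑ yᵢ bᵢ = t` in `I` with
`m - 1` summands, where `t` generates the same ideal as `z - (-1)ᵐ`.

When `I = (π)` is the maximal ideal of a finite chain ring, sort the solutions by the ideal `(πʲ)`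
generated by the `yᵢ`: the map `b ↦ ∑ yᵢ bᵢ` is then onto `(πʲ⁺¹)`, so all its fibres have the same
size. The levels `1 ≤ j < ℓ` contribute a geometric sum, and for `j ≥ ℓ` there is no solution.
-/

section ProdEta

variable {R : Type*} [CommRing R]

theorem prodEta_map {S : Type*} [CommRing S] (f : R →+* S) {n : ℕ} (c : Fin n → R) :
    prodEta (fun i => f (c i)) = f.mapMatrix (prodEta c) := by
  have eta_map (a : R) : eta (f a) = f.mapMatrix (eta a) := by
    ext i j; fin_cases i <;> fin_cases j <;> simp [eta]
  simp only [prodEta, map_list_prod, List.map_ofFn, Function.comp_def, eta_map]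

theorem det_prodEta {n : ℕ} (c : Fin n → R) : (prodEta c).det = 1 := by
  rw [prodEta, ← coe_detMonoidHom, map_list_prod]
  refine List.prod_eq_one fun x hx => ?_
  obtain ⟨i, rfl⟩ : ∃ i, (eta (c i)).det = x := by simpa using hx
  simp [eta]

theorem prodEta_zero (k : ℕ) : prodEta (fun _ : Fin (2 * k) => (0 : R)) = (-1) ^ k := by
  have eta_zero_sq : eta (0 : R) ^ 2 = -1 := by
    ext i j; fin_cases i <;> fin_cases j <;> simp [eta, sq]
  rw [prodEta, List.ofFn_const, List.prod_replicate, pow_mul, eta_zero_sq]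

variable {I : Ideal R}

theorem prodEta_coe_cons {n : ℕ} (a : I) (c : Fin n → I) :
    prodEta (fun i => ((Fin.cons a c : Fin (n + 1) → I) i : R)) =
      eta (a : R) * prodEta (fun i => (c i : R)) := by
  simp [prodEta, List.ofFn_succ]

theorem prodEta_apply_mem_of_ne {k : ℕ} (c : Fin (2 * k) → I) {i j : Fin 2} (hij : i ≠ j) :
    prodEta (fun i => (c i : R)) i j ∈ I := by
  have h : (Ideal.Quotient.mk I).mapMatrix (prodEta fun i => (c i : R)) = (-1) ^ k := by
    rw [← prodEta_map, ← prodEta_zero]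
    simp only [Ideal.Quotient.eq_zero_iff_mem.mpr (c _).2]
  rw [← Ideal.Quotient.eq_zero_iff_mem]
  change (Ideal.Quotient.mk I).mapMatrix (prodEta fun i => (c i : R)) i j = 0
  rw [h]
  obtain hk | hk := neg_one_pow_eq_or (Matrix (Fin 2) (Fin 2) (R ⧸ I)) k <;> simp [hk, hij]

theorem vecMul_eta_mul_eta_mul (x y a b : R) (Q : Matrix (Fin 2) (Fin 2) R) :
    ![x, y] ᵥ* (eta a * (eta b * Q)) =
      ![-(x - b * (a * x + y)), -(a * x + y)] ᵥ* Q := by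
  rw [← mul_assoc, ← vecMul_vecMul]
  congr 1
  ext i
  fin_cases i <;> simp [eta, vecMul, dotProduct, Fin.sum_univ_two] <;> ring

theorem eta_mul_eta_mul_eq_diag_iff {Q : Matrix (Fin 2) (Fin 2) R} (hQ : Q.det = 1) {z w : R}
    (hzw : z * w = 1) (a b : R) :
    eta a * (eta b * Q) = !![z, 0; 0, w] ↔
      Q 0 0 = -z ∧ a = z * Q 0 1 ∧ b = -(w * Q 1 0) := by
  have entries : eta a * (eta b * Q) = !![z, 0; 0, w] ↔
      (a * (b * Q 0 0 - Q 1 0) - Q 0 0 = z ∧ a * (b * Q 0 1 - Q 1 1) - Q 0 1 = 0) ∧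
        b * Q 0 0 - Q 1 0 = 0 ∧ b * Q 0 1 - Q 1 1 = w := by
    rw [← Matrix.ext_iff]
    simp [Fin.forall_fin_two, eta, vecMul, dotProduct, sub_eq_add_neg]
  rw [det_fin_two] at hQ
  rw [entries]
  constructor
  · rintro ⟨⟨h₀₀, h₀₁⟩, h₁₀, h₁₁⟩
    refine ⟨?_, ?_, ?_⟩
    · linear_combination a * h₁₀ - h₀₀
    · linear_combination z * h₀₁ - a * z * h₁₁ - a * hzw
    · linear_combination (a * b * w + -w) * h₁₀ - b * w * h₀₀ - b * hzw
  · rintro ⟨h₀₀, rfl, rfl⟩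
    have h₁₀ : -(w * Q 1 0) * Q 0 0 - Q 1 0 = 0 := by
      linear_combination (-(w * Q 1 0)) * h₀₀ + Q 1 0 * hzw
    have h₁₁ : -(w * Q 1 0) * Q 0 1 - Q 1 1 = w := by
      linear_combination w * hQ - w * Q 1 1 * h₀₀ + Q 1 1 * hzw
    refine ⟨⟨?_, ?_⟩, h₁₀, h₁₁⟩
    · linear_combination z * Q 0 1 * h₁₀ - h₀₀
    · linear_combination z * Q 0 1 * h₁₁ + Q 0 1 * hzw

end ProdEta

section RowCount

/-- The tuples satisfying `P`, fibred over their first entry. -/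
def subtypeConsEquiv {α : Type*} {n : ℕ} (P : (Fin (n + 1) → α) → Prop) :
    {c // P c} ≃ Σ a : α, {c : Fin n → α // P (Fin.cons a c)} :=
  ((Fin.consEquiv fun _ => α).subtypeEquiv fun _ => Iff.rfl).symm.trans
    (Equiv.subtypeProdEquivSigmaSubtype fun a c => P (Fin.cons a c))

/-- The tuples satisfying `P`, fibred over their first two entries. -/
def subtypeConsConsEquiv {α : Type*} {n : ℕ} (P : (Fin (n + 2) → α) → Prop) :
    {c // P c} ≃ Σ a : α × α, {c : Fin n → α // P (Fin.cons a.1 (Fin.cons a.2 c))} :=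
  ((subtypeConsEquiv P).trans (Equiv.sigmaCongrRight fun _ => subtypeConsEquiv _)).trans
    (Equiv.sigmaAssocProd (γ := fun a b => {c // P (Fin.cons a (Fin.cons b c))})).symm

variable {R : Type*} [CommRing R] {I : Ideal R}

/-- Solutions of `y₁ b₁ + ⋯ + y_k b_k = t` with all `yᵢ, bᵢ ∈ I`, as tuples of pairs `(yᵢ, bᵢ)`. -/
abbrev DotSolution (I : Ideal R) (k : ℕ) (t : R) : Type _ :=
  {v : Fin k → I × I // ∑ i, ((v i).1 * (v i).2 : R) = t}

/-- Splitting off the first summand of a solution. -/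
def dotSolutionSuccEquiv (k : ℕ) (t : R) :
    DotSolution I (k + 1) t ≃ Σ a : I × I, DotSolution I k (t - a.1 * a.2) :=
  (subtypeConsEquiv _).trans <| Equiv.sigmaCongrRight fun a =>
    Equiv.subtypeEquivRight fun v => by simp [Fin.sum_univ_succ, eq_sub_iff_add_eq']

/-- Changing the sign of every `yᵢ` changes the sign of `t`. -/
def dotSolutionNegEquiv (k : ℕ) (t : R) : DotSolution I k t ≃ DotSolution I k (-t) :=
  (Equiv.arrowCongr (.refl _) ((Equiv.neg I).prodCongr (.refl I))).subtypeEquiv fun v => by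
    simp

theorem isUnit_add_of_mem_jacobson {x a : R} (hx : IsUnit x)
    (ha : a ∈ Ideal.jacobson (⊥ : Ideal R)) : IsUnit (x + a) := by
  obtain ⟨u, rfl⟩ := hx
  have h : (u : R) + a = u * (a * ↑u⁻¹ + 1) := by
    linear_combination (-a) * u.mul_inv
  rw [h]
  exact u.isUnit.mul (Ideal.mem_jacobson_bot.mp ha _)

/-- The permutation `a ↦ a * u + y` of the ideal `I`, for a unit `u` and `y ∈ I`. -/
def affinePerm (u : Rˣ) (y : I) : Equiv.Perm I where
  toFun a := ⟨a * u + y, I.add_mem (I.mul_mem_right _ a.2) y.2⟩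
  invFun a := ⟨(a - y) * ↑u⁻¹, I.mul_mem_right _ (I.sub_mem a.2 y.2)⟩
  left_inv a := by ext; simp
  right_inv a := by ext; simp

theorem nonempty_row_equiv_dotSolution (hI : I ≤ Ideal.jacobson ⊥) (k : ℕ) (u : Rˣ) (y : I)
    (s : R) :
    Nonempty ({c : Fin (2 * k) → I // (![(u : R), y] ᵥ* prodEta (fun i => (c i : R))) 0 = s} ≃
      DotSolution I k (u - (-1) ^ k * s)) := by
  induction k generalizing u y with
  | zero =>
    refine ⟨Equiv.subtypeEquiv (Equiv.ofUnique (Fin 0 → I) _) fun c => ?_⟩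
    simp [prodEta, sub_eq_zero, eq_comm]
  | succ k ih =>
    have tail_equiv (a : I × I) : Nonempty
        ({c : Fin (2 * k) → I // (![(u : R), y] ᵥ* prodEta
            (fun i => ((Fin.cons a.1 (Fin.cons a.2 c : Fin (2 * k + 1) → I) :
              Fin (2 * k + 2) → I) i : R))) 0 = s} ≃
          DotSolution I k (u - (-1) ^ (k + 1) * s - affinePerm u y a.1 * a.2)) := by
      obtain ⟨x, hx⟩ := isUnit_add_of_mem_jacobson u.isUnit
        (hI (I.neg_mem (I.mul_mem_left a.2 (affinePerm u y a.1).2)))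
      obtain ⟨e⟩ := ih (-x) (-affinePerm u y a.1)
      refine ⟨(Equiv.subtypeEquivRight fun c => ?_).trans (e.trans ?_)⟩
      · rw [prodEta_coe_cons, prodEta_coe_cons, vecMul_eta_mul_eta_mul]
        simp [hx, affinePerm, sub_eq_add_neg]
      · refine (dotSolutionNegEquiv k _).trans (Equiv.cast (congrArg _ ?_))
        rw [Units.val_neg, hx]
        ring
    exact ⟨(subtypeConsConsEquiv _).trans <|
      (Equiv.sigmaCongr ((affinePerm u y).prodCongr (.refl I)) fun a => (tail_equiv a).some).trans
        (dotSolutionSuccEquiv k _).symm⟩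

theorem prodEta_cons_cons_eq_diag_iff {n : ℕ} {z w : R} (hzw : z * w = 1) (a b : I)
    (c : Fin n → I) :
    prodEta (fun i => ((Fin.cons a (Fin.cons b c : Fin (n + 1) → I) : Fin (n + 2) → I) i : R)) =
        !![z, 0; 0, w] ↔
      prodEta (fun i => (c i : R)) 0 0 = -z ∧
        (a : R) = z * prodEta (fun i => (c i : R)) 0 1 ∧
        (b : R) = -(w * prodEta (fun i => (c i : R)) 1 0) := by
  rw [prodEta_coe_cons, prodEta_coe_cons]
  exact eta_mul_eta_mul_eq_diag_iff (det_prodEta _) hzw a b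

/-- A tuple with `[c₁, …, c₂ₖ₊₂] = diag(z, w)` is determined by its last `2k` entries, on which the
only constraint is on the top left entry of their product. -/
def diagEquivTail (k : ℕ) {z w : R} (hzw : z * w = 1) :
    {c : Fin (2 * k + 2) → I // prodEta (fun i => (c i : R)) = !![z, 0; 0, w]} ≃
      {c : Fin (2 * k) → I // prodEta (fun i => (c i : R)) 0 0 = -z} :=
  (subtypeConsConsEquiv _).trans <|
    { toFun c := ⟨c.2.1, ((prodEta_cons_cons_eq_diag_iff hzw _ _ _).mp c.2.2).1⟩
      invFun c := ⟨(⟨z * prodEta (fun i => (c.1 i : R)) 0 1,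
            I.mul_mem_left _ (prodEta_apply_mem_of_ne c.1 zero_ne_one)⟩,
          ⟨-(w * prodEta (fun i => (c.1 i : R)) 1 0),
            I.neg_mem (I.mul_mem_left _ (prodEta_apply_mem_of_ne c.1 one_ne_zero))⟩),
        c.1, (prodEta_cons_cons_eq_diag_iff hzw _ _ _).mpr ⟨c.2, rfl, rfl⟩⟩
      left_inv := fun ⟨(⟨a, _⟩, ⟨b, _⟩), c, hc⟩ => by
        obtain ⟨-, rfl, rfl⟩ := (prodEta_cons_cons_eq_diag_iff hzw _ _ c).mp hc
        rfl
      right_inv _ := rfl }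

theorem card_prodEta_eq_diag (hI : I ≤ Ideal.jacobson ⊥) (k : ℕ) {z w : R} (hzw : z * w = 1) :
    Nat.card {c : Fin (2 * (k + 1)) → R // (∀ i, c i ∈ I) ∧ prodEta c = !![z, 0; 0, w]} =
      Nat.card (DotSolution I k (1 + (-1) ^ k * z)) := by
  let restrict : {c : Fin (2 * k + 2) → R // (∀ i, c i ∈ I) ∧ prodEta c = !![z, 0; 0, w]} ≃
      {c : Fin (2 * k + 2) → I // prodEta (fun i => (c i : R)) = !![z, 0; 0, w]} :=
    { toFun c := ⟨fun i => ⟨c.1 i, c.2.1 i⟩, c.2.2⟩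
      invFun c := ⟨fun i => c.1 i, fun i => (c.1 i).2, c.2⟩ }
  obtain ⟨e⟩ := nonempty_row_equiv_dotSolution hI k 1 0 (-z)
  have row_one_zero (Q : Matrix (Fin 2) (Fin 2) R) : (![1, 0] ᵥ* Q) 0 = Q 0 0 := by
    simp [vecMul, dotProduct]
  simp only [Units.val_one, ZeroMemClass.coe_zero, row_one_zero, mul_neg, sub_neg_eq_add] at e
  exact Nat.card_congr ((restrict.trans (diagEquivTail k hzw)).trans e)

end RowCount

section DotPairs

theorem card_fiber_mul_card_range {G H : Type*} [AddGroup G] [AddGroup H] (f : G →+ H) {t : H}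
    (ht : t ∈ f.range) : Nat.card (f ⁻¹' {t}) * Nat.card f.range = Nat.card G := by
  obtain ⟨g, rfl⟩ := ht
  rw [Nat.card_congr (f.fiberEquivKer g), ← AddSubgroup.index_ker, AddSubgroup.card_mul_index]

theorem ncard_setOf_mem_and_mem_mul {α β : Type*} [Finite α] [Finite β] (A : Set α)
    (B : α → Set β) {c N : ℕ} (hB : ∀ a ∈ A, (B a).ncard * c = N) :
    {v : α × β | v.1 ∈ A ∧ v.2 ∈ B v.1}.ncard * c = A.ncard * N := by
  have := Fintype.ofFinite A
  let e : {v : α × β | v.1 ∈ A ∧ v.2 ∈ B v.1} ≃ Σ a : A, B a :=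
    { toFun v := ⟨⟨v.1.1, v.2.1⟩, v.1.2, v.2.2⟩
      invFun v := ⟨(v.1, v.2), v.1.2, v.2.2⟩ }
  rw [← Nat.card_coe_set_eq, Nat.card_congr e, Nat.card_sigma, Finset.sum_mul]
  simp [hB, Nat.card_coe_set_eq, Set.fintypeCard_eq_ncard]

variable {R : Type*} [CommRing R] {ι : Type*} [Fintype ι]

theorem ncard_setOf_forall_mem (J : Ideal R) :
    {y : ι → R | ∀ i, y i ∈ J}.ncard = Nat.card J ^ Fintype.card ι := by
  let e : {y : ι → R | ∀ i, y i ∈ J} ≃ (ι → J) :=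
    { toFun y i := ⟨y.1 i, y.2 i⟩
      invFun y := ⟨fun i => y i, fun i => (y i).2⟩ }
  rw [← Nat.card_coe_set_eq, Nat.card_congr e, Nat.card_fun, Nat.card_eq_fintype_card (α := ι)]

/-- The linear form `b ↦ ∑ i, y i * b i` on `I^ι`. -/
def dotHom (I : Ideal R) (y : ι → R) : (ι → I) →+ R where
  toFun b := ∑ i, y i * b i
  map_zero' := by simp
  map_add' b b' := by simp [mul_add, Finset.sum_add_distrib]

theorem range_dotHom (I : Ideal R) (y : ι → R) :
    (dotHom I y).range = (I * Ideal.span (Set.range y)).toAddSubgroup := by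
  ext x
  rw [Submodule.mem_toAddSubgroup, ← smul_eq_mul, Ideal.span,
    Submodule.mem_ideal_smul_span_iff_exists_sum]
  constructor
  · rintro ⟨b, rfl⟩
    refine ⟨Finsupp.equivFunOnFinite.symm fun i => b i, fun i => (b i).2, ?_⟩
    simp [Finsupp.sum_fintype, dotHom, mul_comm]
  · rintro ⟨b, hb, rfl⟩
    refine ⟨fun i => ⟨b i, hb i⟩, ?_⟩
    simp [Finsupp.sum_fintype, dotHom, mul_comm]

/-- The pairs `(y, b)` with `y ∈ J^ι`, `b ∈ I^ι` and `∑ i, y i * b i = t`. Only `b` ranges over a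
subtype, so that the sets for different `J` are comparable. -/
def dotPairs (J I : Ideal R) (ι : Type*) [Fintype ι] (t : R) : Set ((ι → R) × (ι → I)) :=
  {v | (∀ i, v.1 i ∈ J) ∧ dotHom I v.1 v.2 = t}

theorem card_dotSolution (I : Ideal R) (k : ℕ) (t : R) :
    Nat.card (DotSolution I k t) = (dotPairs I I (Fin k) t).ncard := by
  let e : DotSolution I k t ≃ dotPairs I I (Fin k) t :=
    { toFun v := ⟨(fun i => (v.1 i).1, fun i => (v.1 i).2), fun i => (v.1 i).1.2, v.2⟩
      invFun v := ⟨fun i => (⟨v.1.1 i, v.2.1 i⟩, v.1.2 i), v.2.2⟩ }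
  rw [Nat.card_congr e, Nat.card_coe_set_eq]

theorem dotPairs_eq_empty {J I : Ideal R} {t : R} (ht : t ∉ I * J) : dotPairs J I ι t = ∅ := by
  refine Set.eq_empty_of_forall_notMem fun v hv => ht ?_
  rw [← hv.2, mul_comm I J]
  exact Ideal.sum_mem _ fun i _ => Ideal.mul_mem_mul (hv.1 i) (v.2 i).2

theorem ncard_dotPairs_mul_card [Finite R] {J' J I K : Ideal R} (hJ : J' ≤ J)
    (hK : ∀ y : ι → R, (∀ i, y i ∈ J) → (¬∀ i, y i ∈ J') → I * Ideal.span (Set.range y) = K)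
    {t : R} (ht : t ∈ K) :
    (dotPairs J I ι t).ncard * Nat.card K = (dotPairs J' I ι t).ncard * Nat.card K +
      (Nat.card J ^ Fintype.card ι - Nat.card J' ^ Fintype.card ι) *
        Nat.card I ^ Fintype.card ι := by
  let A (J : Ideal R) : Set (ι → R) := {y | ∀ i, y i ∈ J}
  have fiber_card : ∀ y ∈ A J \ A J', (dotHom I y ⁻¹' {t}).ncard * Nat.card K =
      Nat.card I ^ Fintype.card ι := by
    rintro y ⟨hyJ, hyJ'⟩
    have range_eq : (dotHom I y).range = K.toAddSubgroup := by
      rw [range_dotHom, hK y hyJ hyJ']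
    have h := card_fiber_mul_card_range (dotHom I y) (t := t) (by rwa [range_eq])
    rwa [range_eq, Nat.card_coe_set_eq, Nat.card_fun, Nat.card_eq_fintype_card (α := ι)] at h
  have diff_eq : dotPairs J I ι t \ dotPairs J' I ι t =
      {v | v.1 ∈ A J \ A J' ∧ v.2 ∈ dotHom I v.1 ⁻¹' {t}} := by
    ext v
    simp only [dotPairs, A, Set.mem_sdiff, Set.mem_ofPred_eq, Set.mem_preimage,
      Set.mem_singleton_iff]
    tauto
  have A_mono : A J' ⊆ A J := fun y hy i => hJ (hy i)
  have dotPairs_mono : dotPairs J' I ι t ⊆ dotPairs J I ι t := fun v hv => ⟨A_mono hv.1, hv.2⟩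
  rw [← Set.ncard_sdiff_add_ncard_of_subset dotPairs_mono, diff_eq, add_mul, add_comm,
    ncard_setOf_mem_and_mem_mul _ _ fiber_card, Set.ncard_sdiff A_mono,
    ncard_setOf_forall_mem, ncard_setOf_forall_mem]

end DotPairs

section ChainRing

open IsLocalRing

variable {R : Type*} [CommRing R] [IsLocalRing R] {π : R}

theorem span_range_eq_span_pow (hπ : maximalIdeal R = Ideal.span {π}) {ι : Type*} {j : ℕ}
    {y : ι → R} (hy : ∀ i, y i ∈ Ideal.span {π ^ j})
    (hy' : ¬∀ i, y i ∈ Ideal.span {π ^ (j + 1)}) :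
    Ideal.span (Set.range y) = Ideal.span {π ^ j} := by
  refine le_antisymm (Ideal.span_le.mpr (Set.range_subset_iff.mpr hy)) ?_
  obtain ⟨i, hi⟩ := not_forall.mp hy'
  obtain ⟨s, hs⟩ := Ideal.mem_span_singleton.mp (hy i)
  have s_unit : IsUnit s := by
    rw [← notMem_maximalIdeal, hπ, Ideal.mem_span_singleton]
    intro hπs
    rw [hs, Ideal.mem_span_singleton, pow_succ] at hi
    exact hi (mul_dvd_mul_left _ hπs)
  rw [← Ideal.span_singleton_mul_right_unit s_unit, ← hs]
  exact Ideal.span_mono (Set.singleton_subset_iff.mpr (Set.mem_range_self i))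

theorem pow_notMem_span_pow_succ (hπ : maximalIdeal R = Ideal.span {π}) {j : ℕ}
    (hj : π ^ j ≠ 0) : π ^ j ∉ Ideal.span {π ^ (j + 1)} := by
  intro h
  obtain ⟨s, hs⟩ := Ideal.mem_span_singleton.mp h
  have one_sub_unit : IsUnit (1 - π * s) := by
    refine isUnit_one_sub_self_of_mem_nonunits _ ((mem_maximalIdeal _).mp ?_)
    exact hπ ▸ Ideal.mul_mem_right _ _ (Ideal.mem_span_singleton_self π)
  refine hj (one_sub_unit.mul_left_eq_zero.mp ?_)
  linear_combination hs

theorem card_span_pow_eq_card_residueField_mul (hπ : maximalIdeal R = Ideal.span {π}) {j : ℕ}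
    (hj : π ^ j ≠ 0) :
    Nat.card (Ideal.span {π ^ j}) =
      Nat.card (ResidueField R) * Nat.card (Ideal.span {π ^ (j + 1)}) := by
  let f : R →+ R := AddMonoidHom.mulLeft (π ^ j)
  have map_top : (⊤ : AddSubgroup R).map f = (Ideal.span {π ^ j}).toAddSubgroup := by
    ext x
    simp [f, Ideal.mem_span_singleton, dvd_def, eq_comm]
  have map_maximalIdeal : (maximalIdeal R).toAddSubgroup.map f =
      (Ideal.span {π ^ (j + 1)}).toAddSubgroup := by
    ext x
    simp [f, hπ, Ideal.mem_span_singleton, dvd_def, pow_succ, mul_assoc, eq_comm]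
  have ker_le : f.ker ≤ (maximalIdeal R).toAddSubgroup := fun x hx =>
    (mem_maximalIdeal x).mpr fun hunit => hj (hunit.mul_left_eq_zero.mp hx)
  have relIndex_eq := AddSubgroup.relIndex_map_map f (maximalIdeal R).toAddSubgroup ⊤
  rw [map_top, map_maximalIdeal, sup_eq_left.mpr ker_le, top_sup_eq,
    AddSubgroup.relIndex_top_right, AddSubgroup.index_eq_card] at relIndex_eq
  have span_le : Ideal.span {π ^ (j + 1)} ≤ Ideal.span {π ^ j} :=
    Ideal.span_singleton_le_span_singleton.mpr (pow_dvd_pow π j.le_succ)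
  have h := AddSubgroup.relIndex_mul_relIndex ⊥ _ _ bot_le (Submodule.toAddSubgroup_mono span_le)
  rw [relIndex_eq, AddSubgroup.relIndex_bot_left, AddSubgroup.relIndex_bot_left, mul_comm] at h
  exact h.symm

theorem pow_ne_zero_of_lt_nilpotencyClass {M : Type*} [MonoidWithZero M] {x : M} {j : ℕ}
    (hj : j < nilpotencyClass x) : x ^ j ≠ 0 :=
  Nat.notMem_of_lt_sInf hj

theorem card_span_pow (hπ : maximalIdeal R = Ideal.span {π}) (hnil : IsNilpotent π) {j : ℕ}
    (hj : j ≤ nilpotencyClass π) :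
    Nat.card (Ideal.span {π ^ j}) = Nat.card (ResidueField R) ^ (nilpotencyClass π - j) := by
  induction hd : nilpotencyClass π - j generalizing j with
  | zero => simp [show j = nilpotencyClass π by omega, pow_nilpotencyClass hnil]
  | succ d ih =>
    have pow_ne_zero : π ^ j ≠ 0 := pow_ne_zero_of_lt_nilpotencyClass (by omega)
    rw [card_span_pow_eq_card_residueField_mul hπ pow_ne_zero, ih (by omega) (by omega),
      pow_succ']

variable [Finite R] {ι : Type*} [Fintype ι] {k : ℕ}

theorem ncard_dotPairs_span_pow_eq_add (hπ : maximalIdeal R = Ideal.span {π}) {j : ℕ}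
    (hj : j < nilpotencyClass π) (hι : Fintype.card ι = k + 1) {t : R}
    (ht : t ∈ Ideal.span {π ^ (j + 1)}) :
    (dotPairs (Ideal.span {π ^ j}) (Ideal.span {π}) ι t).ncard =
      (dotPairs (Ideal.span {π ^ (j + 1)}) (Ideal.span {π}) ι t).ncard +
        Nat.card (ResidueField R) ^
            ((nilpotencyClass π - 1) * (k + 1) + (nilpotencyClass π - j - 1) * k) *
          (Nat.card (ResidueField R) ^ (k + 1) - 1) := by
  have span_mul_span_range (y : ι → R) (hy : ∀ i, y i ∈ Ideal.span {π ^ j})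
      (hy' : ¬∀ i, y i ∈ Ideal.span {π ^ (j + 1)}) :
      Ideal.span {π} * Ideal.span (Set.range y) = Ideal.span {π ^ (j + 1)} := by
    rw [span_range_eq_span_pow hπ hy hy', Ideal.span_singleton_mul_span_singleton, pow_succ']
  have h := ncard_dotPairs_mul_card
    (Ideal.span_singleton_le_span_singleton.mpr (pow_dvd_pow π j.le_succ)) span_mul_span_range ht
  have hnil : IsNilpotent π := isNilpotent_of_pos_nilpotencyClass (by omega)
  have card_span : Nat.card (Ideal.span {π}) =
      Nat.card (ResidueField R) ^ (nilpotencyClass π - 1) := by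
    simpa using card_span_pow hπ hnil (j := 1) (by omega)
  have : Finite (ResidueField R) := .of_surjective _ residue_surjective
  obtain ⟨d, hd⟩ : ∃ d, nilpotencyClass π - j = d + 1 := ⟨nilpotencyClass π - j - 1, by omega⟩
  rw [card_span_pow hπ hnil hj.le, card_span_pow hπ hnil hj, card_span, hι,
    show nilpotencyClass π - (j + 1) = d by omega, hd] at h
  rw [hd, Nat.add_sub_cancel]
  refine Nat.eq_of_mul_eq_mul_right (pow_pos Nat.card_pos d) (h.trans ?_)
  rw [add_mul, pow_succ _ d, mul_pow, ← Nat.mul_sub_one]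
  ring

theorem ncard_dotPairs_span_pow (hπ : maximalIdeal R = Ideal.span {π}) {j ℓ : ℕ} (hjℓ : j ≤ ℓ)
    (hℓ : ℓ < nilpotencyClass π) (hι : Fintype.card ι = k + 1) {t : R}
    (ht : Associated (π ^ ℓ) t) :
    (dotPairs (Ideal.span {π ^ j}) (Ideal.span {π}) ι t).ncard =
      Nat.card (ResidueField R) ^
          ((nilpotencyClass π - 1) * (k + 1) + (nilpotencyClass π - ℓ) * k) *
        (Nat.card (ResidueField R) ^ (k + 1) - 1) *
          qInt (ℓ - j) (Nat.card (ResidueField R) ^ k) := by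
  induction hd : ℓ - j generalizing j with
  | zero =>
    obtain rfl : j = ℓ := by omega
    have t_notMem : t ∉ Ideal.span {π} * Ideal.span {π ^ j} := by
      rw [Ideal.span_singleton_mul_span_singleton, ← pow_succ', Ideal.mem_span_singleton,
        ← ht.dvd_iff_dvd_right, ← Ideal.mem_span_singleton]
      exact pow_notMem_span_pow_succ hπ (pow_ne_zero_of_lt_nilpotencyClass hℓ)
    simp [dotPairs_eq_empty t_notMem, qInt]
  | succ d ih =>
    have t_mem : t ∈ Ideal.span {π ^ (j + 1)} :=
      Ideal.mem_span_singleton.mpr ((pow_dvd_pow π (by omega)).trans ht.dvd)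
    rw [ncard_dotPairs_span_pow_eq_add hπ (by omega) hι t_mem, ih (by omega) (by omega),
      show nilpotencyClass π - j - 1 = nilpotencyClass π - ℓ + d by omega, qInt, qInt,
      Finset.sum_range_succ]
    ring

theorem stmt13_general (hπ : maximalIdeal R = Ideal.span {π}) {r : ℕ}
    (hr : nilpotencyClass π = r) {m : ℕ} (hm : 2 ≤ m) {ℓ : ℕ} (hℓ : 1 ≤ ℓ) (hℓr : ℓ < r) {z : R}
    (hz : Associated (π ^ ℓ) (z - (-1) ^ m)) :
    Nat.card {c : Fin (2 * m) → R //
        (∀ i, c i ∈ maximalIdeal R) ∧ prodEta c = !![z, 0; 0, Ring.inverse z]} =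
      Nat.card (ResidueField R) ^ ((2 * m - 3) * r - ℓ * (m - 2) + 1 - m) *
        (Nat.card (ResidueField R) ^ (m - 1) - 1) *
          qInt (ℓ - 1) (Nat.card (ResidueField R) ^ (m - 2)) := by
  obtain ⟨k, rfl⟩ : ∃ k, m = k + 2 := ⟨m - 2, by omega⟩
  have z_unit : IsUnit z := by
    rw [← sub_add_cancel z ((-1) ^ (k + 2)), add_comm]
    refine isUnit_add_of_mem_jacobson (isUnit_one.neg.pow _) (maximalIdeal_le_jacobson ⊥ ?_)
    rw [hπ, Ideal.mem_span_singleton]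
    exact (dvd_pow_self π (by omega)).trans hz.dvd
  have ht : Associated (π ^ ℓ) (1 + (-1) ^ (k + 1) * z) := by
    refine hz.trans ⟨(-1) ^ (k + 1), ?_⟩
    have sign_sq : ((-1 : R) ^ (k + 1)) ^ 2 = 1 := by simp [← pow_mul]
    push_cast
    linear_combination sign_sq
  have exponent_eq : (2 * (k + 2) - 3) * r - ℓ * k + 1 - (k + 2) =
      (r - 1) * (k + 1) + (r - ℓ) * k := by
    obtain ⟨e, rfl⟩ : ∃ e, r = ℓ + 1 + e := ⟨r - (ℓ + 1), by omega⟩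
    rw [show 2 * (k + 2) - 3 = 2 * k + 1 by omega, show ℓ + 1 + e - 1 = ℓ + e by omega,
      show ℓ + 1 + e - ℓ = e + 1 by omega,
      show (2 * k + 1) * (ℓ + 1 + e) = (ℓ + e) * (k + 1) + (e + 1) * k + (k + 1) + ℓ * k by ring]
    omega
  rw [card_prodEta_eq_diag (maximalIdeal_le_jacobson ⊥) (k + 1) (Ring.mul_inverse_cancel z z_unit),
    card_dotSolution, hπ]
  have h := ncard_dotPairs_span_pow hπ hℓ (hr ▸ hℓr) (Fintype.card_fin (k + 1)) ht
  rw [pow_one, hr, ← exponent_eq] at h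
  simpa using h

end ChainRing

section ZModPrimePow

open IsLocalRing

variable {p r : ℕ}

theorem isLocalRing_zmod_prime_pow [hp : Fact p.Prime] (hr : r ≠ 0) :
    IsLocalRing (ZMod (p ^ r)) := by
  have : Fact (1 < p ^ r) := ⟨Nat.one_lt_pow hr hp.out.one_lt⟩
  exact .of_surjective' (PadicInt.toZModPow r) (ZMod.ringHom_surjective _)

theorem maximalIdeal_zmod_prime_pow [Fact p.Prime] [IsLocalRing (ZMod (p ^ r))] :
    maximalIdeal (ZMod (p ^ r)) = Ideal.span {(p : ZMod (p ^ r))} := by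
  rw [← map_maximalIdeal_of_surjective (PadicInt.toZModPow (p := p) r)
    (ZMod.ringHom_surjective _), PadicInt.maximalIdeal_eq_span_p, Ideal.map_span]
  simp

theorem nilpotencyClass_natCast_zmod_pow (hp : 1 < p) (hr : r ≠ 0) :
    nilpotencyClass (p : ZMod (p ^ r)) = r := by
  obtain ⟨s, rfl⟩ := Nat.exists_eq_succ_of_ne_zero hr
  refine nilpotencyClass_eq_succ_iff.mpr ?_
  rw [← Nat.cast_pow, ← Nat.cast_pow, Ne, ZMod.natCast_eq_zero_iff, ZMod.natCast_eq_zero_iff,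
    Nat.pow_dvd_pow_iff_le_right hp, Nat.pow_dvd_pow_iff_le_right hp]
  omega

theorem card_residueField_zmod_prime_pow [hp : Fact p.Prime] [IsLocalRing (ZMod (p ^ r))]
    (hr : r ≠ 0) : Nat.card (ResidueField (ZMod (p ^ r))) = p := by
  have nilpotencyClass_eq := nilpotencyClass_natCast_zmod_pow hp.out.one_lt hr
  have hnil : IsNilpotent (p : ZMod (p ^ r)) :=
    isNilpotent_of_pos_nilpotencyClass (by omega)
  have h := card_span_pow maximalIdeal_zmod_prime_pow hnil (Nat.zero_le _)
  rw [pow_zero, Ideal.span_singleton_one, Nat.card_congr Submodule.topEquiv.toEquiv,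
    Nat.card_zmod, nilpotencyClass_eq, Nat.sub_zero] at h
  exact Nat.pow_left_injective hr h.symm

theorem sigmaCount_eq (hp : p.Prime) {m : ℕ} (hm : 2 ≤ m) {ℓ : ℕ} (hℓ : 1 ≤ ℓ) (hℓr : ℓ < r) :
    sigmaCount p r (2 * m) ℓ =
      p ^ ((2 * m - 3) * r - ℓ * (m - 2) + 1 - m) * (p ^ (m - 1) - 1) *
        qInt (ℓ - 1) (p ^ (m - 2)) := by
  have : Fact p.Prime := ⟨hp⟩
  have : NeZero (p ^ r) := ⟨pow_ne_zero _ hp.ne_zero⟩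
  have hr : r ≠ 0 := by omega
  have := isLocalRing_zmod_prime_pow (p := p) hr
  have h := stmt13_general maximalIdeal_zmod_prime_pow
    (nilpotencyClass_natCast_zmod_pow hp.one_lt hr) hm hℓ hℓr
    (z := (-1) ^ m + (p : ZMod (p ^ r)) ^ ℓ) (by rw [add_sub_cancel_left])
  rw [card_residueField_zmod_prime_pow hr, maximalIdeal_zmod_prime_pow] at h
  rwa [sigmaCount, Nat.mul_div_cancel_left m two_pos]

end ZModPrimePow

/-- For `m > 2`: `σ_{2m}(1) = 0` and for `1 < ℓ < r`,
`σ_{2m}(ℓ) = p^((2m-3)r - ℓ(m-2) + 1 - m) · (p^(m-1) - 1) · [ℓ-1]_{p^(m-2)}`. -/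
theorem stmt13 (p r : ℕ) (hp : p.Prime) (hr : 2 ≤ r) (m : ℕ) (hm : 2 < m) :
    sigmaCount p r (2 * m) 1 = 0 ∧
    (∀ ℓ, 1 < ℓ → ℓ < r →
      sigmaCount p r (2 * m) ℓ =
        p ^ ((2 * m - 3) * r - ℓ * (m - 2) + 1 - m) * (p ^ (m - 1) - 1) *
          qInt (ℓ - 1) (p ^ (m - 2))) := by
  refine ⟨?_, fun ℓ hℓ hℓr => sigmaCount_eq hp hm.le hℓ.le hℓr⟩
  rw [sigmaCount_eq hp hm.le le_rfl hr]
  simp [qInt]
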